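/- Suppose AADMM is run with parameters α_t ≡ 1, θ_t = τ_t = ρ_t ≡ ρ for some ρ > 0, and η_t ≡ η for some η ≥ L_G + χρ‖K‖². Then for every t ≥ 1, the averages x^{t+1} := (1/t)Σ_{i=2}^{t+1}x_i and w^{t+1} := (1/t)Σ_{i=2}^{t+1}w_i satisfy: (i) G(x^{t+1}) + F(w^{t+1}) − f* ≤ (1/(2t))(ηD_{x*}² + ρ(1−χ)D_{x*,K}²); and (ii) ‖Bw^{t+1} − Kx^{t+1} − b‖² ≤ (2/t²)(2D_{y*}²/ρ² + ηD_{x*}²/ρ + (1−χ)D_{x*,K}²). -/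

import Mathlib

open RealInnerProductSpace

/-!
Compare the iterates with a feasible point `(w*, x*)` and any multiplier `y'`. The optimality
conditions of the two subproblems, together with convexity and smoothness of `G`, bound the
Lagrangian gap after one iteration by the decrease of the potential
`‖y - y'‖² / (2ρ) + η/2 ‖x - x*‖² + ρ/2 ‖B (w - w*)‖² - χρ/2 ‖K (x - x*)‖²`,
and `η ≥ L + χρ‖K‖²` both absorbs the error terms and keeps the potential nonnegative.
Telescoping with `y' = 0` bounds the objective. Telescoping with `y' = y*` makes the gaps
nonnegative, so it bounds `‖y - y*‖`; since the residuals are the scaled increments of the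
multiplier, this controls the averaged residual.
-/

section ConvexAnalysis

open Set

section Module

variable {E : Type*} [AddCommGroup E] [Module ℝ E] {s : Set E} {p u : E}

lemma sub_add_lineDeriv_nonneg_of_isMinOn_add {φ h : E → ℝ} {h' : ℝ} (hφ : ConvexOn ℝ s φ)
    (hmin : IsMinOn (φ + h) s p) (hp : p ∈ s) (hu : u ∈ s)
    (hh : HasLineDerivWithinAt ℝ h h' s p (u - p)) : 0 ≤ φ u - φ p + h' := by
  set k : ℝ → ℝ := fun τ ↦ τ * (φ u - φ p) + h (p + τ • (u - p))
  have segment_mem : ∀ τ ∈ Icc (0 : ℝ) 1, p + τ • (u - p) ∈ s :=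
    fun τ hτ ↦ hφ.1.add_smul_sub_mem hp hu hτ
  have k_deriv : HasDerivWithinAt k (φ u - φ p + h') (Icc 0 1) 0 := by
    have slope_deriv := (hasDerivWithinAt_id 0 (Icc 0 1)).mul_const (φ u - φ p)
    rw [one_mul] at slope_deriv
    exact slope_deriv.add (HasDerivWithinAt.mono hh segment_mem)
  have k_min : IsMinOn k (Icc 0 1) 0 := by
    intro τ hτ
    have hle : φ p + h p ≤ φ (p + τ • (u - p)) + h (p + τ • (u - p)) := hmin (segment_mem τ hτ)
    have hconv := hφ.2 hp hu (sub_nonneg.2 hτ.2) hτ.1 (sub_add_cancel 1 τ)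
    rw [show (1 - τ) • p + τ • u = p + τ • (u - p) by module] at hconv
    simp only [smul_eq_mul] at hconv
    simp only [mem_ofPred_eq, k, zero_mul, zero_smul, add_zero, zero_add]
    linarith
  have one_mem_cone : (1 : ℝ) - 0 ∈ posTangentConeAt (Icc 0 1) 0 :=
    sub_mem_posTangentConeAt_of_segment_subset (segment_eq_Icc zero_le_one).le
  simpa using k_min.localize.hasFDerivWithinAt_nonneg k_deriv.hasFDerivWithinAt one_mem_cone

lemma convexOn_map_average_le {f : E → ℝ} (hf : ConvexOn ℝ s f) {v : ℕ → E} {t : ℕ} (ht : 1 ≤ t)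
    (hv : ∀ i, v i ∈ s) :
    f ((t : ℝ)⁻¹ • ∑ i ∈ Finset.range t, v i) ≤ (t : ℝ)⁻¹ * ∑ i ∈ Finset.range t, f (v i) := by
  have weights_sum : ∑ _i ∈ Finset.range t, (t : ℝ)⁻¹ = 1 := by
    have : (t : ℝ) ≠ 0 := by positivity
    simp [this]
  simpa only [Finset.smul_sum, Finset.mul_sum, smul_eq_mul] using
    hf.map_sum_le (fun _ _ ↦ by positivity) weights_sum (fun i _ ↦ hv i)

lemma hasLineDerivAt_norm_map_sub_sq {V : Type*} [NormedAddCommGroup V] [InnerProductSpace ℝ V]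
    (A : E →ₗ[ℝ] V) (c : V) (p v : E) :
    HasLineDerivAt ℝ (fun u ↦ ‖A u - c‖ ^ 2) (2 * ⟪A p - c, A v⟫) p v := by
  have h : HasDerivAt (fun τ : ℝ ↦ A (p + τ • v) - c) (A v) 0 := by
    simpa using (((hasDerivAt_id (0 : ℝ)).smul_const (A v)).const_add (A p)).sub_const c
  simpa [HasLineDerivAt] using h.norm_sq

end Module

variable {E : Type*} [NormedAddCommGroup E]

/-- The descent inequality obtained by adding the subgradient inequality at `p` and `u` to the
quadratic upper bound at `p` and `q`; it is the only way in which the smooth part `f`, with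
gradient `g`, of the objective enters the analysis. -/
def ThreePointDescentOn [InnerProductSpace ℝ E] (f : E → ℝ) (g : E → E) (s : Set E) (L : ℝ) :
    Prop :=
  ∀ p ∈ s, ∀ q ∈ s, ∀ u ∈ s, f q - f u ≤ ⟪g p, q - u⟫ + L / 2 * ‖q - p‖ ^ 2

lemma fderivWithin_le_sub_of_convexOn [NormedSpace ℝ E] {s : Set E} {p u : E} {f : E → ℝ}
    {f' : E →L[ℝ] ℝ} (hf : ConvexOn ℝ s f) (hf' : HasFDerivWithinAt f f' s p) (hp : p ∈ s)
    (hu : u ∈ s) : f' (u - p) ≤ f u - f p := by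
  -- Every point minimizes `f + (-f)`.
  have hmin : IsMinOn (f + -f) s p := by simp [isMinOn_iff]
  have := sub_add_lineDeriv_nonneg_of_isMinOn_add hf hmin hp hu
    (hf'.neg.hasLineDerivWithinAt (u - p))
  simp only [neg_apply] at this
  linarith

lemma threePointDescentOn_of_convexOn [InnerProductSpace ℝ E] {f : E → ℝ} {g : E → E} {s : Set E}
    {L : ℝ} (hf : ConvexOn ℝ s f) (hg : ∀ p ∈ s, HasFDerivWithinAt f (innerSL ℝ (g p)) s p)
    (hL : ∀ p ∈ s, ∀ q ∈ s, f q - f p - ⟪g p, q - p⟫ ≤ L / 2 * ‖q - p‖ ^ 2) :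
    ThreePointDescentOn f g s L := by
  intro p hp q hq u hu
  have hlower : ⟪g p, u - p⟫ ≤ f u - f p := fderivWithin_le_sub_of_convexOn hf (hg p hp) hp hu
  have hsplit : ⟪g p, q - p⟫ = ⟪g p, q - u⟫ + ⟪g p, u - p⟫ := by
    rw [← inner_add_right, sub_add_sub_cancel]
  linarith [hL p hp q hq]

end ConvexAnalysis

section InnerProductIdentities

variable {V : Type*} [NormedAddCommGroup V] [InnerProductSpace ℝ V]

lemma inner_sub_self_eq_half_norm_sq (a b : V) :
    ⟪a - b, a⟫ = (‖a‖ ^ 2 - ‖b‖ ^ 2 + ‖a - b‖ ^ 2) / 2 := by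
  rw [norm_sub_sq_real, inner_sub_left, real_inner_self_eq_norm_sq, real_inner_comm b a]
  ring

lemma inner_multiplier_step_eq {ρ : ℝ} (hρ : ρ ≠ 0) (y₀ y₁ y' s₀ s₁ q : V)
    (hy : y₁ = y₀ - ρ • (s₁ - q)) :
    ⟪y₁, s₁⟫ - ⟪y₀, q⟫ - ⟪y', s₁ - q⟫ + ρ * ⟪s₀ - q, q⟫ =
      1 / (2 * ρ) * (‖y₀ - y'‖ ^ 2 - ‖y₁ - y'‖ ^ 2)
        + ρ / 2 * (‖s₀‖ ^ 2 - ‖s₁‖ ^ 2 - ‖s₀ - q‖ ^ 2) := by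
  rw [hy, sub_right_comm y₀]
  simp only [norm_sub_sq_real, inner_sub_left, inner_sub_right, real_inner_smul_left,
    real_inner_smul_right, norm_smul, mul_pow, Real.norm_eq_abs, sq_abs,
    real_inner_self_eq_norm_sq, real_inner_comm s₁ q]
  field_simp
  ring

end InnerProductIdentities

lemma norm_sub_sq_le_two_mul_add {V : Type*} [SeminormedAddCommGroup V] (a b c : V) :
    ‖a - b‖ ^ 2 ≤ 2 * (‖a - c‖ ^ 2 + ‖b - c‖ ^ 2) := by
  calc ‖a - b‖ ^ 2 ≤ (‖a - c‖ + ‖b - c‖) ^ 2 := by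
        gcongr
        simpa only [norm_sub_rev c b] using norm_sub_le_norm_sub_add_norm_sub a c b
    _ ≤ 2 * (‖a - c‖ ^ 2 + ‖b - c‖ ^ 2) := add_sq_le

lemma mul_norm_map_sq_le {E V : Type*} [SeminormedAddCommGroup E] [NormedSpace ℝ E]
    [SeminormedAddCommGroup V] [NormedSpace ℝ V] (A : E →L[ℝ] V) {c : ℝ} (hc : 0 ≤ c) (v : E) :
    c * ‖A v‖ ^ 2 ≤ c * ‖A‖ ^ 2 * ‖v‖ ^ 2 := by
  rw [mul_assoc, ← mul_pow]
  gcongr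
  exact A.le_opNorm v

/-- The data of the affine equality constrained composite optimization problem `min G x + F w`
over `x ∈ X` and all `w`, subject to `B w - K x = b`. -/
structure AECCO (𝒲 𝒳 𝒴 : Type*) [AddCommGroup 𝒲] [Module ℝ 𝒲] [NormedAddCommGroup 𝒳]
    [InnerProductSpace ℝ 𝒳] [NormedAddCommGroup 𝒴] [InnerProductSpace ℝ 𝒴] where
  X : Set 𝒳
  G : 𝒳 → ℝ
  F : 𝒲 → ℝ
  K : 𝒳 →L[ℝ] 𝒴
  B : 𝒲 →ₗ[ℝ] 𝒴
  b : 𝒴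

namespace AECCO

variable {𝒲 𝒳 𝒴 : Type*} [AddCommGroup 𝒲] [Module ℝ 𝒲] [NormedAddCommGroup 𝒳]
  [InnerProductSpace ℝ 𝒳] [NormedAddCommGroup 𝒴] [InnerProductSpace ℝ 𝒴] (P : AECCO 𝒲 𝒳 𝒴)

section Definitions

/-- The violation of the constraint at `(w, x)`. -/
def residual (w : 𝒲) (x : 𝒳) : 𝒴 := P.B w - P.K x - P.b

/-- The Lagrangian, with the primal variables `(w, x)` paired so that Mathlib's
`IsSaddlePointOn` applies. -/
noncomputable def lagrangian (z : 𝒲 × 𝒳) (y : 𝒴) : ℝ :=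
  P.G z.2 + P.F z.1 - ⟪y, P.residual z.1 z.2⟫

/-- The objective of the `x`-subproblem at the iterate `(x, w, y)`, where `g` is the gradient of
`G` at `x`. The parameter `χ` interpolates between keeping (`χ = 0`) and linearizing (`χ = 1`) the
quadratic penalty. -/
noncomputable def xObjective (χ ρ η : ℝ) (g x : 𝒳) (w : 𝒲) (y : 𝒴) (u : 𝒳) : ℝ :=
  ⟪g, u⟫ - χ * ρ * ⟪P.residual w x, P.K u⟫ + (1 - χ) * ρ / 2 * ‖P.residual w u‖ ^ 2
    + ⟪y, P.K u⟫ + η / 2 * ‖u - x‖ ^ 2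

/-- The objective of the `w`-subproblem, where `x` is the new primal iterate and `y` the old
multiplier. -/
noncomputable def wObjective (ρ : ℝ) (x : 𝒳) (y : 𝒴) (u : 𝒲) : ℝ :=
  P.F u - ⟪y, P.B u⟫ + ρ / 2 * ‖P.residual u x‖ ^ 2

/-- The sequences `x`, `w`, `y` are iterates of AADMM with `α ≡ 1` and constant parameters
`θ = τ = ρ` and `η`, started at a feasible point. Iterates are numbered from `0`, so `x t` is the
paper's `x_{t+1}`, and `G'` plays the role of the gradient of `G`. -/
structure IsADMMRun (G' : 𝒳 → 𝒳) (χ ρ η : ℝ) (x : ℕ → 𝒳) (w : ℕ → 𝒲) (y : ℕ → 𝒴) : Prop where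
  mem : ∀ t, x t ∈ P.X
  residual_zero : P.residual (w 0) (x 0) = 0
  isMinOn_x : ∀ t, IsMinOn (P.xObjective χ ρ η (G' (x t)) (x t) (w t) (y t)) P.X (x (t + 1))
  isMinOn_w : ∀ t, IsMinOn (P.wObjective ρ (x (t + 1)) (y t)) Set.univ (w (t + 1))
  y_succ : ∀ t, y (t + 1) = y t - ρ • P.residual (w (t + 1)) (x (t + 1))

/-- The Lyapunov function of the iteration, relative to the reference point `(w', x', y')`. -/
noncomputable def potential (χ ρ η : ℝ) (w' : 𝒲) (x' : 𝒳) (y' : 𝒴) (w : 𝒲) (x : 𝒳) (y : 𝒴) : ℝ :=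
  1 / (2 * ρ) * ‖y - y'‖ ^ 2 + η / 2 * ‖x - x'‖ ^ 2 + ρ / 2 * ‖P.B (w - w')‖ ^ 2
    - χ * ρ / 2 * ‖P.K (x - x')‖ ^ 2

end Definitions

variable {P}

section SaddlePoint

variable {ws : 𝒲} {xs : 𝒳} {ys : 𝒴}

lemma residual_eq_zero_of_isSaddlePointOn
    (hsaddle : IsSaddlePointOn (Set.univ ×ˢ P.X) Set.univ P.lagrangian (ws, xs) ys)
    (hxs : xs ∈ P.X) : P.residual ws xs = 0 := by
  have h := hsaddle (ws, xs) ⟨trivial, hxs⟩ (ys - P.residual ws xs) trivial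
  simp only [lagrangian, inner_sub_left, real_inner_self_eq_norm_sq] at h
  have : ‖P.residual ws xs‖ ^ 2 ≤ 0 := by linarith
  simpa using le_antisymm this (sq_nonneg _)

lemma le_lagrangian_of_isSaddlePointOn
    (hsaddle : IsSaddlePointOn (Set.univ ×ˢ P.X) Set.univ P.lagrangian (ws, xs) ys)
    (w : 𝒲) {x : 𝒳} (hx : x ∈ P.X) : P.G xs + P.F ws ≤ P.lagrangian (w, x) ys := by
  simpa [lagrangian] using hsaddle (w, x) ⟨trivial, hx⟩ 0 trivial

end SaddlePoint

section Residual

lemma map_sub_eq_residual_add {w w' : 𝒲} {x x' : 𝒳} (h : P.residual w' x' = 0) :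
    P.B (w - w') = P.residual w x + P.K (x - x') := by
  have hB : P.B w' = P.K x' + P.b := by rwa [residual, sub_sub, sub_eq_zero] at h
  simp only [residual, map_sub, hB]
  abel

lemma residual_average (w : ℕ → 𝒲) (x : ℕ → 𝒳) {t : ℕ} (ht : 1 ≤ t) :
    P.residual ((t : ℝ)⁻¹ • ∑ i ∈ Finset.range t, w i) ((t : ℝ)⁻¹ • ∑ i ∈ Finset.range t, x i) =
      (t : ℝ)⁻¹ • ∑ i ∈ Finset.range t, P.residual (w i) (x i) := by
  have : (t : ℝ) ≠ 0 := by positivity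
  simp only [residual, Finset.sum_sub_distrib, map_smul, map_sum, smul_sub, Finset.sum_const,
    Finset.card_range, ← Nat.cast_smul_eq_nsmul ℝ t, smul_smul, inv_mul_cancel₀ this, one_smul]

end Residual

section Subproblems

variable {χ ρ η : ℝ}

lemma xObjective_variational_inequality {g x₀ x₁ u : 𝒳} {w₀ : 𝒲} {y₀ : 𝒴} (hX : Convex ℝ P.X)
    (hmin : IsMinOn (P.xObjective χ ρ η g x₀ w₀ y₀) P.X x₁) (hx₁ : x₁ ∈ P.X) (hu : u ∈ P.X) :
    0 ≤ ⟪g, u - x₁⟫ - χ * ρ * ⟪P.residual w₀ x₀, P.K (u - x₁)⟫ + ⟪y₀, P.K (u - x₁)⟫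
      - (1 - χ) * ρ * ⟪P.residual w₀ x₁, P.K (u - x₁)⟫ + η * ⟪x₁ - x₀, u - x₁⟫ := by
  set φ : 𝒳 →ₗ[ℝ] ℝ := innerₗ 𝒳 g - (χ * ρ) • (innerₗ 𝒴 (P.residual w₀ x₀) ∘ₗ P.K.toLinearMap)
    + innerₗ 𝒴 y₀ ∘ₗ P.K.toLinearMap
  set h : 𝒳 → ℝ := fun v ↦ (1 - χ) * ρ / 2 * ‖P.residual w₀ v‖ ^ 2 + η / 2 * ‖v - x₀‖ ^ 2
  have objective_eq : P.xObjective χ ρ η g x₀ w₀ y₀ = φ + h := by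
    ext v
    simp only [xObjective, φ, h, Pi.add_apply, LinearMap.add_apply, LinearMap.sub_apply,
      LinearMap.smul_apply, LinearMap.comp_apply, innerₗ_apply_apply, smul_eq_mul,
      ContinuousLinearMap.coe_coe]
    ring
  have penalty_deriv : HasLineDerivAt ℝ (fun v ↦ ‖P.residual w₀ v‖ ^ 2)
      (2 * ⟪P.residual w₀ x₁, -P.K (u - x₁)⟫) x₁ (u - x₁) := by
    have residual_eq : ∀ v, P.residual w₀ v = (-P.K.toLinearMap) v - (P.b - P.B w₀) := fun v ↦ by
      simp only [residual, LinearMap.neg_apply, ContinuousLinearMap.coe_coe]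
      abel
    simp only [residual_eq]
    exact hasLineDerivAt_norm_map_sub_sq (-P.K.toLinearMap) (P.b - P.B w₀) x₁ (u - x₁)
  have proximal_deriv := hasLineDerivAt_norm_map_sub_sq LinearMap.id x₀ x₁ (u - x₁)
  have h_deriv := (penalty_deriv.const_mul ((1 - χ) * ρ / 2)).add (proximal_deriv.const_mul (η / 2))
  have := sub_add_lineDeriv_nonneg_of_isMinOn_add (φ.convexOn hX) (objective_eq ▸ hmin) hx₁ hu
    (HasLineDerivAt.hasLineDerivWithinAt (f := h) h_deriv P.X)
  rw [← map_sub] at this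
  simp only [φ, LinearMap.add_apply, LinearMap.sub_apply, LinearMap.smul_apply,
    LinearMap.comp_apply, innerₗ_apply_apply, smul_eq_mul, ContinuousLinearMap.coe_coe,
    LinearMap.id_apply, inner_neg_right] at this
  linarith

lemma wObjective_variational_inequality {w₁ : 𝒲} {x₁ : 𝒳} {y₀ : 𝒴}
    (hF : ConvexOn ℝ Set.univ P.F) (hmin : IsMinOn (P.wObjective ρ x₁ y₀) Set.univ w₁) (u : 𝒲) :
    P.F w₁ - P.F u ≤ ⟪y₀ - ρ • P.residual w₁ x₁, P.B (w₁ - u)⟫ := by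
  set φ : 𝒲 → ℝ := P.F - ⇑(innerₗ 𝒴 y₀ ∘ₗ P.B)
  set h : 𝒲 → ℝ := fun v ↦ ρ / 2 * ‖P.B v - (P.K x₁ + P.b)‖ ^ 2
  have objective_eq : P.wObjective ρ x₁ y₀ = φ + h := by
    ext v
    simp [wObjective, φ, h, residual, sub_sub]
  have φ_convex : ConvexOn ℝ Set.univ φ := hF.sub (LinearMap.concaveOn _ convex_univ)
  have h_deriv := (hasLineDerivAt_norm_map_sub_sq P.B (P.K x₁ + P.b) w₁ (u - w₁)).const_mul (ρ / 2)
  have := sub_add_lineDeriv_nonneg_of_isMinOn_add φ_convex (objective_eq ▸ hmin) trivial trivial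
    (HasLineDerivAt.hasLineDerivWithinAt (f := h) h_deriv Set.univ)
  simp only [φ, Pi.sub_apply, LinearMap.comp_apply, innerₗ_apply_apply, map_sub, inner_sub_left,
    inner_sub_right, real_inner_smul_left, residual, sub_sub] at this ⊢
  linarith

end Subproblems

section Potential

variable {χ ρ η : ℝ} {w w' : 𝒲} {x x' : 𝒳} {y y' : 𝒴}

lemma norm_sub_sq_le_potential (hχ : 0 ≤ χ) (hρ : 0 ≤ ρ) (hη : χ * ρ * ‖P.K‖ ^ 2 ≤ η) :
    1 / (2 * ρ) * ‖y - y'‖ ^ 2 ≤ P.potential χ ρ η w' x' y' w x y := by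
  have hK : χ * ρ * ‖P.K (x - x')‖ ^ 2 ≤ η * ‖x - x'‖ ^ 2 :=
    (mul_norm_map_sq_le P.K (mul_nonneg hχ hρ) _).trans (by gcongr)
  have hB : 0 ≤ ρ / 2 * ‖P.B (w - w')‖ ^ 2 := by positivity
  rw [potential]
  linarith

lemma potential_eq_of_residual_eq_zero (h : P.residual w x = 0) (h' : P.residual w' x' = 0) :
    P.potential χ ρ η w' x' y' w x y =
      1 / (2 * ρ) * ‖y - y'‖ ^ 2
        + 1 / 2 * (η * ‖x - x'‖ ^ 2 + ρ * (1 - χ) * ‖P.K (x - x')‖ ^ 2) := by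
  rw [potential, map_sub_eq_residual_add h', h, zero_add]
  ring

end Potential

namespace IsADMMRun

variable {G' : 𝒳 → 𝒳} {χ ρ η L : ℝ} {x : ℕ → 𝒳} {w : ℕ → 𝒲} {y : ℕ → 𝒴}
  {ws : 𝒲} {xs : 𝒳} {ys : 𝒴}

lemma inner_gradient_le (run : P.IsADMMRun G' χ ρ η x w y) (hX : Convex ℝ P.X) (hxs : xs ∈ P.X)
    (hfeas : P.residual ws xs = 0) (t : ℕ) :
    ⟪G' (x t), x (t + 1) - xs⟫ ≤
      ρ * ⟪P.B (w t - ws) - P.K (x (t + 1) - xs), P.K (x (t + 1) - xs)⟫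
        + χ * ρ * ⟪P.K (x (t + 1) - xs) - P.K (x t - xs), P.K (x (t + 1) - xs)⟫
        - ⟪y t, P.K (x (t + 1) - xs)⟫ - η * ⟪(x (t + 1) - xs) - (x t - xs), x (t + 1) - xs⟫ := by
  have hopt := xObjective_variational_inequality hX (run.isMinOn_x t) (run.mem (t + 1)) hxs
  rw [eq_sub_of_add_eq (map_sub_eq_residual_add hfeas).symm,
    eq_sub_of_add_eq (map_sub_eq_residual_add (x := x (t + 1)) hfeas).symm,
    ← neg_sub (x (t + 1)) xs, map_neg, ← sub_sub_sub_cancel_right (x (t + 1)) (x t) xs] at hopt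
  simp only [inner_neg_right, inner_sub_left _ _ (P.K (x (t + 1) - xs))] at hopt ⊢
  linarith

lemma lagrangian_sub_le_potential_sub (run : P.IsADMMRun G' χ ρ η x w y)
    (hG : ThreePointDescentOn P.G G' P.X L) (hX : Convex ℝ P.X) (hF : ConvexOn ℝ Set.univ P.F)
    (hχ : 0 ≤ χ) (hρ : 0 < ρ) (hη : L + χ * ρ * ‖P.K‖ ^ 2 ≤ η) (hxs : xs ∈ P.X)
    (hfeas : P.residual ws xs = 0) (y' : 𝒴) (t : ℕ) :
    P.lagrangian (w (t + 1), x (t + 1)) y' - (P.G xs + P.F ws) ≤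
      P.potential χ ρ η ws xs y' (w t) (x t) (y t)
        - P.potential χ ρ η ws xs y' (w (t + 1)) (x (t + 1)) (y (t + 1)) := by
  have hgrad := run.inner_gradient_le hX hxs hfeas t
  have hdescent := hG _ (run.mem t) _ (run.mem (t + 1)) _ hxs
  have hw := wObjective_variational_inequality hF (run.isMinOn_w t) ws
  have hres : P.residual (w (t + 1)) (x (t + 1)) = P.B (w (t + 1) - ws) - P.K (x (t + 1) - xs) :=
    eq_sub_of_add_eq (map_sub_eq_residual_add hfeas).symm
  have hmult := inner_multiplier_step_eq hρ.ne' (y t) (y (t + 1)) y' (P.B (w t - ws))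
    (P.B (w (t + 1) - ws)) (P.K (x (t + 1) - xs)) (hres ▸ run.y_succ t)
  have hdefect : 0 ≤ ρ / 2 * ‖P.B (w t - ws) - P.K (x (t + 1) - xs)‖ ^ 2 := by positivity
  have habsorb : L * ‖x (t + 1) - x t‖ ^ 2 + χ * ρ * ‖P.K (x (t + 1) - xs) - P.K (x t - xs)‖ ^ 2
      ≤ η * ‖x (t + 1) - x t‖ ^ 2 := by
    rw [← map_sub, sub_sub_sub_cancel_right]
    have := mul_le_mul_of_nonneg_right hη (sq_nonneg ‖x (t + 1) - x t‖)
    linarith [mul_norm_map_sq_le P.K (mul_nonneg hχ hρ.le) (x (t + 1) - x t)]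
  rw [inner_sub_self_eq_half_norm_sq (P.K (x (t + 1) - xs)),
    inner_sub_self_eq_half_norm_sq (x (t + 1) - xs), sub_sub_sub_cancel_right] at hgrad
  rw [← run.y_succ t] at hw
  simp only [lagrangian, potential, hres]
  linarith

lemma sum_lagrangian_sub_le (run : P.IsADMMRun G' χ ρ η x w y)
    (hG : ThreePointDescentOn P.G G' P.X L) (hX : Convex ℝ P.X) (hF : ConvexOn ℝ Set.univ P.F)
    (hχ : 0 ≤ χ) (hρ : 0 < ρ) (hL : 0 ≤ L) (hη : L + χ * ρ * ‖P.K‖ ^ 2 ≤ η) (hxs : xs ∈ P.X)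
    (hfeas : P.residual ws xs = 0) (y' : 𝒴) (t : ℕ) :
    ∑ i ∈ Finset.range t, (P.lagrangian (w (i + 1), x (i + 1)) y' - (P.G xs + P.F ws))
        + 1 / (2 * ρ) * ‖y t - y'‖ ^ 2 ≤
      1 / (2 * ρ) * ‖y 0 - y'‖ ^ 2
        + 1 / 2 * (η * ‖x 0 - xs‖ ^ 2 + ρ * (1 - χ) * ‖P.K (x 0 - xs)‖ ^ 2) := by
  have htele := Finset.sum_le_sum fun i (_ : i ∈ Finset.range t) ↦
    run.lagrangian_sub_le_potential_sub hG hX hF hχ hρ hη hxs hfeas y' i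
  rw [Finset.sum_range_sub' fun i ↦ P.potential χ ρ η ws xs y' (w i) (x i) (y i),
    potential_eq_of_residual_eq_zero run.residual_zero hfeas] at htele
  have hlast := P.norm_sub_sq_le_potential (w := w t) (w' := ws) (x := x t) (x' := xs) (y := y t)
    (y' := y') hχ hρ.le (by linarith : χ * ρ * ‖P.K‖ ^ 2 ≤ η)
  linarith

lemma multiplier_eq_sub_sum_residual (run : P.IsADMMRun G' χ ρ η x w y) (t : ℕ) :
    y t = y 0 - ρ • ∑ i ∈ Finset.range t, P.residual (w (i + 1)) (x (i + 1)) := by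
  induction t with
  | zero => simp
  | succ t ih => rw [run.y_succ, Finset.sum_range_succ, smul_add, ← sub_sub, ← ih]

theorem objective_average_sub_le (run : P.IsADMMRun G' χ ρ η x w y)
    (hG : ThreePointDescentOn P.G G' P.X L) (hGconv : ConvexOn ℝ P.X P.G)
    (hF : ConvexOn ℝ Set.univ P.F) (hχ : 0 ≤ χ) (hρ : 0 < ρ) (hL : 0 ≤ L)
    (hη : L + χ * ρ * ‖P.K‖ ^ 2 ≤ η) (hxs : xs ∈ P.X) (hfeas : P.residual ws xs = 0)
    (hy : y 0 = 0) {t : ℕ} (ht : 1 ≤ t) :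
    P.G ((t : ℝ)⁻¹ • ∑ i ∈ Finset.range t, x (i + 1))
        + P.F ((t : ℝ)⁻¹ • ∑ i ∈ Finset.range t, w (i + 1)) - (P.G xs + P.F ws) ≤
      1 / (2 * t) * (η * ‖x 0 - xs‖ ^ 2 + ρ * (1 - χ) * ‖P.K (x 0 - xs)‖ ^ 2) := by
  have hsum := run.sum_lagrangian_sub_le hG hGconv.1 hF hχ hρ hL hη hxs hfeas 0 t
  have hlast : 0 ≤ 1 / (2 * ρ) * ‖y t - 0‖ ^ 2 := by positivity
  simp only [lagrangian, inner_zero_left, sub_zero, Finset.sum_sub_distrib, Finset.sum_add_distrib,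
    Finset.sum_const, Finset.card_range, nsmul_eq_mul, hy, norm_zero] at hsum hlast
  have hGavg := convexOn_map_average_le hGconv ht fun i ↦ run.mem (i + 1)
  have hFavg := convexOn_map_average_le hF ht fun i ↦ Set.mem_univ (w (i + 1))
  have ht₀ : (0 : ℝ) < t := by positivity
  rw [← div_eq_inv_mul, le_div_iff₀ ht₀] at hGavg hFavg
  rw [one_div_mul_eq_div, le_div_iff₀ (by positivity)]
  linarith

theorem norm_residual_average_sq_le (run : P.IsADMMRun G' χ ρ η x w y)
    (hG : ThreePointDescentOn P.G G' P.X L) (hX : Convex ℝ P.X) (hF : ConvexOn ℝ Set.univ P.F)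
    (hχ : 0 ≤ χ) (hρ : 0 < ρ) (hL : 0 ≤ L) (hη : L + χ * ρ * ‖P.K‖ ^ 2 ≤ η) (hxs : xs ∈ P.X)
    (hsaddle : IsSaddlePointOn (Set.univ ×ˢ P.X) Set.univ P.lagrangian (ws, xs) ys)
    {t : ℕ} (ht : 1 ≤ t) :
    ‖P.residual ((t : ℝ)⁻¹ • ∑ i ∈ Finset.range t, w (i + 1))
        ((t : ℝ)⁻¹ • ∑ i ∈ Finset.range t, x (i + 1))‖ ^ 2 ≤
      2 / (t : ℝ) ^ 2 * (2 * ‖y 0 - ys‖ ^ 2 / ρ ^ 2 + η * ‖x 0 - xs‖ ^ 2 / ρ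
        + (1 - χ) * ‖P.K (x 0 - xs)‖ ^ 2) := by
  have hfeas := residual_eq_zero_of_isSaddlePointOn hsaddle hxs
  have hsum := run.sum_lagrangian_sub_le hG hX hF hχ hρ hL hη hxs hfeas ys t
  have hgap : 0 ≤ ∑ i ∈ Finset.range t,
      (P.lagrangian (w (i + 1), x (i + 1)) ys - (P.G xs + P.F ws)) :=
    Finset.sum_nonneg fun i _ ↦ sub_nonneg.2 <|
      le_lagrangian_of_isSaddlePointOn hsaddle _ (run.mem (i + 1))
  set D : ℝ := η * ‖x 0 - xs‖ ^ 2 + ρ * (1 - χ) * ‖P.K (x 0 - xs)‖ ^ 2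
  have hdual : ‖y t - ys‖ ^ 2 ≤ ‖y 0 - ys‖ ^ 2 + ρ * D := by
    have h := (le_add_of_nonneg_left hgap).trans hsum
    field_simp at h
    linarith
  have hincr : ‖y 0 - y t‖ ^ 2 ≤ 2 * (2 * ‖y 0 - ys‖ ^ 2 + ρ * D) := by
    linarith [norm_sub_sq_le_two_mul_add (y 0) (y t) ys]
  have hsum_residual : ∑ i ∈ Finset.range t, P.residual (w (i + 1)) (x (i + 1)) =
      ρ⁻¹ • (y 0 - y t) := by
    rw [run.multiplier_eq_sub_sum_residual t, sub_sub_cancel, inv_smul_smul₀ hρ.ne']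
  rw [residual_average (fun i ↦ w (i + 1)) (fun i ↦ x (i + 1)) ht, hsum_residual, smul_smul,
    norm_smul, mul_pow, Real.norm_eq_abs, sq_abs]
  calc ((t : ℝ)⁻¹ * ρ⁻¹) ^ 2 * ‖y 0 - y t‖ ^ 2
      ≤ ((t : ℝ)⁻¹ * ρ⁻¹) ^ 2 * (2 * (2 * ‖y 0 - ys‖ ^ 2 + ρ * D)) := by gcongr
    _ = _ := by simp only [D]; field_simp; ring

end IsADMMRun

end AECCO

lemma sum_Icc_two_eq_sum_range {M : Type*} [AddCommMonoid M] (f : ℕ → M) (t : ℕ) :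
    ∑ i ∈ Finset.Icc 2 (t + 1), f i = ∑ i ∈ Finset.range t, f (i + 2) := by
  rw [Finset.range_eq_Ico, Finset.sum_Ico_add', zero_add]
  rfl

theorem stmt_13_general {𝒲 𝒳 𝒴 : Type*} [AddCommGroup 𝒲] [Module ℝ 𝒲]
    [NormedAddCommGroup 𝒳] [InnerProductSpace ℝ 𝒳] [NormedAddCommGroup 𝒴] [InnerProductSpace ℝ 𝒴]
    (P : AECCO 𝒲 𝒳 𝒴) {G' : 𝒳 → 𝒳} {χ ρ η L : ℝ} {x : ℕ → 𝒳} {w : ℕ → 𝒲} {y : ℕ → 𝒴}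
    {ws : 𝒲} {xs : 𝒳} {ys : 𝒴} (hGconv : ConvexOn ℝ P.X P.G)
    (hGgrad : ∀ p ∈ P.X, HasFDerivWithinAt P.G (innerSL ℝ (G' p)) P.X p)
    (hGsmooth : ∀ p ∈ P.X, ∀ q ∈ P.X, P.G q - P.G p - ⟪G' p, q - p⟫ ≤ L / 2 * ‖q - p‖ ^ 2)
    (hL : 0 ≤ L) (hF : ConvexOn ℝ Set.univ P.F) (hxs : xs ∈ P.X)
    (hsaddle : IsSaddlePointOn (Set.univ ×ˢ P.X) Set.univ P.lagrangian (ws, xs) ys)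
    (hχ : 0 ≤ χ) (hρ : 0 < ρ) (hη : L + χ * ρ * ‖P.K‖ ^ 2 ≤ η)
    (run : P.IsADMMRun G' χ ρ η x w y) (hy : y 0 = 0) {t : ℕ} (ht : 1 ≤ t) :
    (P.G ((t : ℝ)⁻¹ • ∑ i ∈ Finset.range t, x (i + 1))
        + P.F ((t : ℝ)⁻¹ • ∑ i ∈ Finset.range t, w (i + 1)) - (P.G xs + P.F ws) ≤
      1 / (2 * t) * (η * ‖x 0 - xs‖ ^ 2 + ρ * (1 - χ) * ‖P.K (x 0 - xs)‖ ^ 2)) ∧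
    ‖P.residual ((t : ℝ)⁻¹ • ∑ i ∈ Finset.range t, w (i + 1))
        ((t : ℝ)⁻¹ • ∑ i ∈ Finset.range t, x (i + 1))‖ ^ 2 ≤
      2 / (t : ℝ) ^ 2 * (2 * ‖y 0 - ys‖ ^ 2 / ρ ^ 2 + η * ‖x 0 - xs‖ ^ 2 / ρ
        + (1 - χ) * ‖P.K (x 0 - xs)‖ ^ 2) := by
  have hG := threePointDescentOn_of_convexOn hGconv hGgrad hGsmooth
  have hfeas := AECCO.residual_eq_zero_of_isSaddlePointOn hsaddle hxs
  exact ⟨run.objective_average_sub_le hG hGconv hF hχ hρ hL hη hxs hfeas hy ht,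
    run.norm_residual_average_sq_le hG hGconv.1 hF hχ hρ hL hη hxs hsaddle ht⟩

theorem stmt_13
    {𝒲 𝒳 𝒴 : Type*}
    [NormedAddCommGroup 𝒲] [InnerProductSpace ℝ 𝒲] [FiniteDimensional ℝ 𝒲]
    [NormedAddCommGroup 𝒳] [InnerProductSpace ℝ 𝒳] [FiniteDimensional ℝ 𝒳]
    [NormedAddCommGroup 𝒴] [InnerProductSpace ℝ 𝒴] [FiniteDimensional ℝ 𝒴]
    (X : Set 𝒳) (hXclosed : IsClosed X) (hXconv : Convex ℝ X)
    (G : 𝒳 → ℝ) (G' : 𝒳 → 𝒳) (hGgrad : ∀ p, HasGradientAt G (G' p) p)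
    (hGconv : ConvexOn ℝ Set.univ G)
    (L_G : ℝ) (hLG : 0 < L_G)
    (hGsmooth : ∀ x₁ ∈ X, ∀ x₂ ∈ X,
      G x₂ - G x₁ - ⟪G' x₁, x₂ - x₁⟫ ≤ L_G / 2 * ‖x₂ - x₁‖ ^ 2)
    (F : 𝒲 → ℝ) (hFconv : ConvexOn ℝ Set.univ F) (hFlsc : LowerSemicontinuous F)
    (K : 𝒳 →L[ℝ] 𝒴) (B : 𝒲 →L[ℝ] 𝒴) (b : 𝒴)
    (ws : 𝒲) (xs : 𝒳) (ys : 𝒴) (hxs : xs ∈ X)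
    (hsaddle₁ : ∀ yv : 𝒴,
      G xs + F ws - ⟪yv, B ws - K xs - b⟫ ≤ G xs + F ws - ⟪ys, B ws - K xs - b⟫)
    (hsaddle₂ : ∀ wv : 𝒲, ∀ xv ∈ X,
      G xs + F ws - ⟪ys, B ws - K xs - b⟫ ≤ G xv + F wv - ⟪ys, B wv - K xv - b⟫)
    (χ : ℝ) (hχ : χ = 0 ∨ χ = 1)
    (α η θ τ ρ : ℕ → ℝ)
    (hα : ∀ t, 1 ≤ t → 0 < α t ∧ α t ≤ 1)
    (hη : ∀ t, 1 ≤ t → 0 < η t) (hθ : ∀ t, 1 ≤ t → 0 ≤ θ t)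
    (hτ : ∀ t, 1 ≤ t → 0 < τ t) (hρ : ∀ t, 1 ≤ t → 0 < ρ t)
    (x xag xmd : ℕ → 𝒳) (w wag : ℕ → 𝒲) (y yag : ℕ → 𝒴)
    (hx1 : x 1 ∈ X) (hw1 : B (w 1) = K (x 1) + b) (hy1 : y 1 = 0)
    (hxag1 : xag 1 = x 1) (hwag1 : wag 1 = w 1) (hyag1 : yag 1 = y 1)
    (hxmd : ∀ t, 1 ≤ t → xmd t = (1 - α t) • xag t + α t • x t)
    (hxmem : ∀ t, 1 ≤ t → x (t + 1) ∈ X)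
    (hxstep : ∀ t, 1 ≤ t → ∀ u ∈ X,
      ⟪G' (xmd t), x (t + 1)⟫ - χ * θ t * ⟪B (w t) - K (x t) - b, K (x (t + 1))⟫
        + (1 - χ) * θ t / 2 * ‖B (w t) - K (x (t + 1)) - b‖ ^ 2
        + ⟪y t, K (x (t + 1))⟫ + η t / 2 * ‖x (t + 1) - x t‖ ^ 2
      ≤ ⟪G' (xmd t), u⟫ - χ * θ t * ⟪B (w t) - K (x t) - b, K u⟫
        + (1 - χ) * θ t / 2 * ‖B (w t) - K u - b‖ ^ 2
        + ⟪y t, K u⟫ + η t / 2 * ‖u - x t‖ ^ 2)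
    (hxagstep : ∀ t, 1 ≤ t → xag (t + 1) = (1 - α t) • xag t + α t • x (t + 1))
    (hwstep : ∀ t, 1 ≤ t → ∀ u : 𝒲,
      F (w (t + 1)) - ⟪y t, B (w (t + 1))⟫ + τ t / 2 * ‖B (w (t + 1)) - K (x (t + 1)) - b‖ ^ 2
      ≤ F u - ⟪y t, B u⟫ + τ t / 2 * ‖B u - K (x (t + 1)) - b‖ ^ 2)
    (hwagstep : ∀ t, 1 ≤ t → wag (t + 1) = (1 - α t) • wag t + α t • w (t + 1))
    (hystep : ∀ t, 1 ≤ t → y (t + 1) = y t - ρ t • (B (w (t + 1)) - K (x (t + 1)) - b))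
    (hyagstep : ∀ t, 1 ≤ t → yag (t + 1) = (1 - α t) • yag t + α t • y (t + 1))
    (ρv ηv : ℝ) (hρv : 0 < ρv) (hηv : L_G + χ * ρv * ‖K‖ ^ 2 ≤ ηv)
    (hαdef : ∀ t, 1 ≤ t → α t = 1)
    (hθdef : ∀ t, 1 ≤ t → θ t = ρv) (hτdef : ∀ t, 1 ≤ t → τ t = ρv)
    (hρdef : ∀ t, 1 ≤ t → ρ t = ρv)
    (hηdef : ∀ t, 1 ≤ t → η t = ηv) :
    ∀ t : ℕ, 1 ≤ t →
      (G ((t : ℝ)⁻¹ • ∑ i ∈ Finset.Icc 2 (t + 1), x i) + F ((t : ℝ)⁻¹ • ∑ i ∈ Finset.Icc 2 (t + 1), w i) - (G xs + F ws)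
        ≤ 1 / (2 * (t : ℝ)) * (ηv * ‖x 1 - xs‖ ^ 2 + ρv * (1 - χ) * ‖K (x 1 - xs)‖ ^ 2)) ∧
      ‖B ((t : ℝ)⁻¹ • ∑ i ∈ Finset.Icc 2 (t + 1), w i) - K ((t : ℝ)⁻¹ • ∑ i ∈ Finset.Icc 2 (t + 1), x i) - b‖ ^ 2
        ≤ 2 / (t : ℝ) ^ 2 * (2 * ‖y 1 - ys‖ ^ 2 / ρv ^ 2 + ηv * ‖x 1 - xs‖ ^ 2 / ρv
            + (1 - χ) * ‖K (x 1 - xs)‖ ^ 2) := by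
  intro t ht
  let P : AECCO 𝒲 𝒳 𝒴 := ⟨X, G, F, K, B, b⟩
  have hxmd_eq : ∀ t, 1 ≤ t → xmd t = x t := fun t ht ↦ by simp [hxmd t ht, hαdef t ht]
  have hX : ∀ t, x (t + 1) ∈ X := fun t ↦ t.casesOn hx1 fun t ↦ hxmem (t + 1) (by simp)
  have run : P.IsADMMRun G' χ ρv ηv (fun t ↦ x (t + 1)) (fun t ↦ w (t + 1))
      (fun t ↦ y (t + 1)) :=
    { mem := hX
      residual_zero := by simp [AECCO.residual, P, hw1]
      isMinOn_x := fun t u hu ↦ by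
        simpa [P, AECCO.xObjective, AECCO.residual, hxmd_eq, hθdef, hηdef] using
          hxstep (t + 1) (by simp) u hu
      isMinOn_w := fun t u _ ↦ by
        simpa [P, AECCO.wObjective, AECCO.residual, hτdef] using hwstep (t + 1) (by simp) u
      y_succ := fun t ↦ by simpa [P, AECCO.residual, hρdef] using hystep (t + 1) (by simp) }
  have hsaddle : IsSaddlePointOn (Set.univ ×ˢ P.X) Set.univ P.lagrangian (ws, xs) ys :=
    fun z hz yv _ ↦ (hsaddle₁ yv).trans (hsaddle₂ z.1 z.2 hz.2)
  have hχ₀ : 0 ≤ χ := by rcases hχ with rfl | rfl <;> norm_num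
  simp only [sum_Icc_two_eq_sum_range]
  exact stmt_13_general P (hGconv.subset (Set.subset_univ X) hXconv)
    (fun p _ ↦ (hGgrad p).hasFDerivAt.hasFDerivWithinAt) hGsmooth hLG.le hFconv hxs hsaddle hχ₀
    hρv hηv run hy1 ht
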